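/- Let A and B be nondegenerate SVNR-sets of dimension p on X = {x_1, …, x_n}, and let w_1, …, w_n be weights with w_j ≥ 0 and Σ_{j=1}^n w_j = 1. Then the weighted Dice similarity measure satisfies: (1) 0 ≤ W(A,B)_D ≤ 1; (2) W(A,B)_D = W(B,A)_D; (3) if t_A^i(x_j) = t_B^i(x_j), i_A^i(x_j) = i_B^i(x_j) and f_A^i(x_j) = f_B^i(x_j) for every j ∈ {1,…,n} and i ∈ {1,…,p}, then W(A,B)_D = 1. -/

import Mathlib

open Finset

noncomputable def weightedDiceSVNR (n p : ℕ) (w : Fin n → ℝ)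
    (tA iA fA tB iB fB : Fin p → Fin n → ℝ) : ℝ :=
  ∑ j : Fin n, w j * ((1 / (p : ℝ)) * ∑ i : Fin p,
    (2 * (tA i j * tB i j + iA i j * iB i j + fA i j * fB i j)) /
      ((tA i j ^ 2 + iA i j ^ 2 + fA i j ^ 2) + (tB i j ^ 2 + iB i j ^ 2 + fB i j ^ 2)))

/-!
Reading each triple of membership values as a vector, every summand of the measure is a quotient
`2⟪x, y⟫ / (‖x‖² + ‖y‖²)`, which is at most `1` because `0 ≤ ‖x - y‖²`. The measure is a convex
combination of these quotients, so it lies in every convex set that contains them: the interval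
`[0, 1]` for the bounds, the singleton `{1}` when the two sets agree.
-/

open scoped BigOperators

section DiceSimilarity

variable {E : Type*} [NormedAddCommGroup E] [InnerProductSpace ℝ E] {x y : E}

/-- The Dice similarity of two vectors of a real inner product space. The junk value of the division
makes it `0` at `x = y = 0`. -/
noncomputable def diceSimilarity (x y : E) : ℝ :=
  2 * inner ℝ x y / (‖x‖ ^ 2 + ‖y‖ ^ 2)

theorem diceSimilarity_comm (x y : E) : diceSimilarity x y = diceSimilarity y x := by
  rw [diceSimilarity, diceSimilarity, real_inner_comm, add_comm]

theorem diceSimilarity_nonneg (h : 0 ≤ inner ℝ x y) : 0 ≤ diceSimilarity x y := by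
  unfold diceSimilarity
  positivity

theorem two_mul_inner_le_norm_sq_add_norm_sq (x y : E) :
    2 * inner ℝ x y ≤ ‖x‖ ^ 2 + ‖y‖ ^ 2 := by
  have h : 0 ≤ ‖x‖ ^ 2 - 2 * inner ℝ x y + ‖y‖ ^ 2 := norm_sub_sq_real x y ▸ sq_nonneg ‖x - y‖
  linarith

theorem diceSimilarity_le_one (x y : E) : diceSimilarity x y ≤ 1 :=
  div_le_one_of_le₀ (two_mul_inner_le_norm_sq_add_norm_sq x y) (by positivity)

theorem diceSimilarity_self (hx : x ≠ 0) : diceSimilarity x x = 1 := by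
  rw [diceSimilarity, real_inner_self_eq_norm_sq, ← two_mul]
  exact div_self (by simpa using hx)

end DiceSimilarity

theorem expect_mem_of_convex {𝕜 κ : Type*} [Field 𝕜] [LinearOrder 𝕜] [IsStrictOrderedRing 𝕜]
    {s : Set 𝕜} (hs : Convex 𝕜 s) {t : Finset κ} (ht : t.Nonempty) {z : κ → 𝕜}
    (hz : ∀ i ∈ t, z i ∈ s) : 𝔼 i ∈ t, z i ∈ s := by
  have hcard : (#t : 𝕜) ≠ 0 := Nat.cast_ne_zero.2 ht.card_ne_zero
  rw [expect_eq_sum_div_card, div_eq_inv_mul, mul_sum]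
  exact hs.sum_mem (fun _ _ => by positivity) (by simp [hcard]) hz

section WeightedDiceSimilarity

variable {ι κ E : Type*} [Fintype ι] [Fintype κ] [NormedAddCommGroup E] [InnerProductSpace ℝ E]
  {w : ι → ℝ} {x y : κ → ι → E}

/-- The weighted Dice similarity of two families of vectors: the Dice similarities are averaged
uniformly over `κ`, the components of a refined set, and with weights `w` over `ι`, the points of
the universe. -/
noncomputable def weightedDiceSimilarity (w : ι → ℝ) (x y : κ → ι → E) : ℝ :=
  ∑ j, w j * 𝔼 i, diceSimilarity (x i j) (y i j)

theorem weightedDiceSimilarity_comm (w : ι → ℝ) (x y : κ → ι → E) :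
    weightedDiceSimilarity w x y = weightedDiceSimilarity w y x := by
  simp only [weightedDiceSimilarity, diceSimilarity_comm]

theorem weightedDiceSimilarity_mem_of_convex [Nonempty κ] {s : Set ℝ} (hs : Convex ℝ s)
    (hw : ∀ j, 0 ≤ w j) (hw1 : ∑ j, w j = 1) (h : ∀ i j, diceSimilarity (x i j) (y i j) ∈ s) :
    weightedDiceSimilarity w x y ∈ s :=
  hs.sum_mem (fun j _ => hw j) hw1 fun j _ =>
    expect_mem_of_convex hs univ_nonempty fun i _ => h i j

theorem stmt_4_general [Nonempty κ] (hxy : ∀ i j, 0 ≤ inner ℝ (x i j) (y i j))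
    (hnd : ∀ i j, ¬(x i j = 0 ∧ y i j = 0)) (hw : ∀ j, 0 ≤ w j) (hw1 : ∑ j, w j = 1) :
    (0 ≤ weightedDiceSimilarity w x y ∧ weightedDiceSimilarity w x y ≤ 1) ∧
    weightedDiceSimilarity w x y = weightedDiceSimilarity w y x ∧
    ((∀ i j, x i j = y i j) → weightedDiceSimilarity w x y = 1) := by
  refine ⟨?_, weightedDiceSimilarity_comm w x y, fun h => ?_⟩
  · exact weightedDiceSimilarity_mem_of_convex (convex_Icc 0 1) hw hw1 fun i j =>
      ⟨diceSimilarity_nonneg (hxy i j), diceSimilarity_le_one _ _⟩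
  · obtain rfl : x = y := funext₂ h
    exact weightedDiceSimilarity_mem_of_convex (convex_singleton 1) hw hw1 fun i j =>
      diceSimilarity_self fun h0 => hnd i j ⟨h0, h0⟩

end WeightedDiceSimilarity

/-- The values of truth, indeterminacy and falsity membership as a vector of Euclidean space: the
`N_{ij}` are inner products and the `S_A^{ij}`, `S_B^{ij}` squared norms of such vectors. -/
noncomputable def neutrosophicTriple (t i f : ℝ) : EuclideanSpace ℝ (Fin 3) := !₂[t, i, f]

theorem inner_neutrosophicTriple (t i f t' i' f' : ℝ) :
    inner ℝ (neutrosophicTriple t i f) (neutrosophicTriple t' i' f') =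
      t * t' + i * i' + f * f' := by
  simp [neutrosophicTriple, PiLp.inner_apply, Fin.sum_univ_three, mul_comm]

theorem inner_neutrosophicTriple_nonneg {t i f t' i' f' : ℝ} (ht : 0 ≤ t) (hi : 0 ≤ i) (hf : 0 ≤ f)
    (ht' : 0 ≤ t') (hi' : 0 ≤ i') (hf' : 0 ≤ f') :
    0 ≤ inner ℝ (neutrosophicTriple t i f) (neutrosophicTriple t' i' f') := by
  rw [inner_neutrosophicTriple]
  positivity

theorem norm_neutrosophicTriple_sq (t i f : ℝ) :
    ‖neutrosophicTriple t i f‖ ^ 2 = t ^ 2 + i ^ 2 + f ^ 2 := by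
  simp [neutrosophicTriple, EuclideanSpace.real_norm_sq_eq, Fin.sum_univ_three]

theorem neutrosophicTriple_inj {t i f t' i' f' : ℝ} :
    neutrosophicTriple t i f = neutrosophicTriple t' i' f' ↔ t = t' ∧ i = i' ∧ f = f' := by
  simp [neutrosophicTriple]

theorem neutrosophicTriple_eq_zero_iff {t i f : ℝ} :
    neutrosophicTriple t i f = 0 ↔ t = 0 ∧ i = 0 ∧ f = 0 := by
  simp [neutrosophicTriple]

theorem weightedDiceSVNR_eq_weightedDiceSimilarity {n p : ℕ} (w : Fin n → ℝ)
    (tA iA fA tB iB fB : Fin p → Fin n → ℝ) :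
    weightedDiceSVNR n p w tA iA fA tB iB fB =
      weightedDiceSimilarity w (fun i j => neutrosophicTriple (tA i j) (iA i j) (fA i j))
        (fun i j => neutrosophicTriple (tB i j) (iB i j) (fB i j)) := by
  simp only [weightedDiceSVNR, weightedDiceSimilarity, diceSimilarity, inner_neutrosophicTriple,
    norm_neutrosophicTriple_sq, Fintype.expect_eq_sum_div_card, Fintype.card_fin,
    one_div_mul_eq_div]

theorem stmt_4
    (n p : ℕ) (hn : 1 ≤ n) (hp : 1 ≤ p)
    (tA iA fA tB iB fB : Fin p → Fin n → ℝ)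
    (htA : ∀ i j, tA i j ∈ Set.Icc (0 : ℝ) 1)
    (hiA : ∀ i j, iA i j ∈ Set.Icc (0 : ℝ) 1)
    (hfA : ∀ i j, fA i j ∈ Set.Icc (0 : ℝ) 1)
    (htB : ∀ i j, tB i j ∈ Set.Icc (0 : ℝ) 1)
    (hiB : ∀ i j, iB i j ∈ Set.Icc (0 : ℝ) 1)
    (hfB : ∀ i j, fB i j ∈ Set.Icc (0 : ℝ) 1)
    (hnd : ∀ i j, ¬((tA i j = 0 ∧ iA i j = 0 ∧ fA i j = 0) ∧
                      (tB i j = 0 ∧ iB i j = 0 ∧ fB i j = 0)))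
    (w : Fin n → ℝ) (hw : ∀ j, 0 ≤ w j) (hw1 : ∑ j, w j = 1) :
    (0 ≤ weightedDiceSVNR n p w tA iA fA tB iB fB ∧ weightedDiceSVNR n p w tA iA fA tB iB fB ≤ 1) ∧
    weightedDiceSVNR n p w tA iA fA tB iB fB = weightedDiceSVNR n p w tB iB fB tA iA fA ∧
    ((∀ i j, tA i j = tB i j ∧ iA i j = iB i j ∧ fA i j = fB i j) →
      weightedDiceSVNR n p w tA iA fA tB iB fB = 1) := by
  have : NeZero p := ⟨by lia⟩
  simp only [weightedDiceSVNR_eq_weightedDiceSimilarity, ← neutrosophicTriple_inj]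
  exact stmt_4_general
    (fun i j => inner_neutrosophicTriple_nonneg (htA i j).1 (hiA i j).1 (hfA i j).1
      (htB i j).1 (hiB i j).1 (hfB i j).1)
    (by simpa only [neutrosophicTriple_eq_zero_iff]) hw hw1
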